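/- arXiv:2009.10024 — 5 statements merged into one kernel-verified Lean document; each statement's English description precedes it below -/
import Mathlib

section
/- Let 𝒲 be a weakly exact structure on an additive category 𝒜. If i : A ⟶ B and j : B ⟶ C are morphisms of 𝒜 such that i admits a cokernel and the composite j ∘ i is an admissible monic of 𝒲, then i is an admissible monic of 𝒲 (Quillen's obscure axiom for weakly exact structures, monic version). -/
open CategoryTheory CategoryTheory.Limits ZeroObject

universe w v u

namespace WeaklyExactPaper

section Preamble

variable {C : Type u} [Category.{v} C] [Preadditive C] [HasZeroObject C] [HasBinaryBiproducts C]

/-- `(i, d)` is a kernel–cokernel pair: `i` is a kernel of `d` and `d` is a cokernel of `i`. -/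
structure IsKernelCokernelPair {A B Z : C} (i : A ⟶ B) (d : B ⟶ Z) : Prop where
  w : i ≫ d = 0
  isKernel : Nonempty (IsLimit (KernelFork.ofι i w))
  isCokernel : Nonempty (IsColimit (CokernelCofork.ofπ d w))

/-- Isomorphism of composable pairs `(i, d) ≅ (i', d')`. -/
def PairIso {A B Z A' B' Z' : C} (i : A ⟶ B) (d : B ⟶ Z) (i' : A' ⟶ B') (d' : B' ⟶ Z') : Prop :=
  ∃ (eA : A ≅ A') (eB : B ≅ B') (eZ : Z ≅ Z'),
    i ≫ eB.hom = eA.hom ≫ i' ∧ d ≫ eZ.hom = eB.hom ≫ d'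

/-- `f` is a kernel of some morphism. -/
def IsSomeKernel {A B : C} (f : A ⟶ B) : Prop :=
  ∃ (Z : C) (g : B ⟶ Z) (w : f ≫ g = 0), Nonempty (IsLimit (KernelFork.ofι f w))

/-- `g` is a cokernel of some morphism. -/
def IsSomeCokernel {B Z : C} (g : B ⟶ Z) : Prop :=
  ∃ (A : C) (f : A ⟶ B) (w : f ≫ g = 0), Nonempty (IsColimit (CokernelCofork.ofπ g w))

/-- `f` admits a cokernel. -/
def AdmitsCokernel {A B : C} (f : A ⟶ B) : Prop :=
  ∃ (Z : C) (g : B ⟶ Z) (w : f ≫ g = 0), Nonempty (IsColimit (CokernelCofork.ofπ g w))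

/-- `g` admits a kernel. -/
def AdmitsKernel {B Z : C} (g : B ⟶ Z) : Prop :=
  ∃ (A : C) (f : A ⟶ B) (w : f ≫ g = 0), Nonempty (IsLimit (KernelFork.ofι f w))

/-- A weakly exact structure on an additive category: a class of kernel–cokernel pairs,
closed under isomorphisms of composable pairs and binary direct sums, containing the pairs
`(1_X, X ⟶ 0)` and `(0 ⟶ X, 1_X)`, and satisfying the pushout axiom (E2) and the
pullback axiom (E2)ᵒᵖ. -/
structure WeaklyExactStructure (C : Type u) [Category.{v} C] [Preadditive C]
    [HasZeroObject C] [HasBinaryBiproducts C] where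
  W : ∀ ⦃A B Z : C⦄, (A ⟶ B) → (B ⟶ Z) → Prop
  kc_of_mem : ∀ {A B Z : C} {i : A ⟶ B} {d : B ⟶ Z}, W i d → IsKernelCokernelPair i d
  iso_closed : ∀ {A B Z A' B' Z' : C} {i : A ⟶ B} {d : B ⟶ Z} {i' : A' ⟶ B'} {d' : B' ⟶ Z'},
    W i d → PairIso i d i' d' → W i' d'
  sum_mem : ∀ {A₁ B₁ Z₁ A₂ B₂ Z₂ : C} {i₁ : A₁ ⟶ B₁} {d₁ : B₁ ⟶ Z₁} {i₂ : A₂ ⟶ B₂}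
    {d₂ : B₂ ⟶ Z₂}, W i₁ d₁ → W i₂ d₂ → W (biprod.map i₁ i₂) (biprod.map d₁ d₂)
  id_zero_mem : ∀ X : C, W (𝟙 X) (0 : X ⟶ (0 : C))
  zero_id_mem : ∀ X : C, W (0 : (0 : C) ⟶ X) (𝟙 X)
  pushout_mem : ∀ {A B Z A' : C} {i : A ⟶ B} {d : B ⟶ Z}, W i d → ∀ t : A ⟶ A',
    ∃ (S : C) (g : B ⟶ S) (i' : A' ⟶ S), IsPushout i t g i' ∧ ∃ (Z' : C) (d' : S ⟶ Z'), W i' d'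
  pullback_mem : ∀ {A B Z D : C} {i : A ⟶ B} {d : B ⟶ Z}, W i d → ∀ t : D ⟶ Z,
    ∃ (P : C) (p : P ⟶ B) (q : P ⟶ D), IsPullback p q d t ∧ ∃ (A'' : C) (i'' : A'' ⟶ P), W i'' q

/-- `i` is an admissible monic of `𝒲`. -/
def AdmissibleMonic (𝒲 : WeaklyExactStructure C) {A B : C} (i : A ⟶ B) : Prop :=
  ∃ (Z : C) (d : B ⟶ Z), 𝒲.W i d

/-- `d` is an admissible epic of `𝒲`. -/
def AdmissibleEpic (𝒲 : WeaklyExactStructure C) {B Z : C} (d : B ⟶ Z) : Prop :=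
  ∃ (A : C) (i : A ⟶ B), 𝒲.W i d

/-- `(i, d)` is a split kernel–cokernel pair. -/
def IsSplitPair {A B Z : C} (i : A ⟶ B) (d : B ⟶ Z) : Prop :=
  ∃ (X Y : C), PairIso (biprod.inl : X ⟶ X ⊞ Y) (biprod.snd : X ⊞ Y ⟶ Y) i d

end Preamble

section Statement

variable {C : Type u} [Category.{v} C] [Preadditive C] [HasZeroObject C] [HasBinaryBiproducts C]

/-!
Let `k : B ⟶ Z` be a cokernel of `i`, let `p : X ⟶ Y` complete `i ≫ j` to a pair of `𝒲`, and let
`u : Z ⟶ Y` be the morphism with `k ≫ u = j ≫ p`. Since `k` is a cokernel of `i`, the object `X ⊞ Z`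
is a pushout of `i ≫ j` along `i`, with `biprod.lift j k : B ⟶ X ⊞ Z` opposite `i ≫ j`; by (E2) this
morphism is an admissible monic with cokernel `biprod.desc p (-u)`. Being a kernel of
`biprod.desc p (-u)`, it exhibits `B` as the pullback of `p` along `u`, so `k` is an admissible epic
by (E2)ᵒᵖ, and its kernel is the kernel `i ≫ j` of `p` lifted to the pullback, namely `i`.
-/

section ZeroMorphisms

variable {D : Type*} [Category* D] [HasZeroMorphisms D]

lemma isKernel_snd_of_isPullback {K P X Y Z : D} {fst : P ⟶ X} {snd : P ⟶ Y} {f : X ⟶ Z}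
    {g : Y ⟶ Z} (sq : IsPullback fst snd f g) {i : K ⟶ P} (hsnd : i ≫ snd = 0)
    {w : (i ≫ fst) ≫ f = 0} (hi : IsLimit (KernelFork.ofι (i ≫ fst) w)) :
    Nonempty (IsLimit (KernelFork.ofι i hsnd)) := by
  have : Mono (i ≫ fst) := mono_of_isLimit_fork hi
  have : Mono i := mono_of_mono i fst
  refine ⟨KernelFork.IsLimit.ofι' i hsnd fun x hx ↦ ?_⟩
  have hxf : (x ≫ fst) ≫ f = 0 := by rw [Category.assoc, sq.w, reassoc_of% hx, zero_comp]
  obtain ⟨l, hl⟩ := KernelFork.IsLimit.lift' hi (x ≫ fst) hxf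
  exact ⟨l, sq.hom_ext (by simpa using hl) (by simp [hsnd, hx])⟩

lemma isCokernel_inr_of_isPushout {A X Y S Q : D} {f : A ⟶ X} {g : A ⟶ Y} {inl : X ⟶ S}
    {inr : Y ⟶ S} (sq : IsPushout f g inl inr) {d : S ⟶ Q} (hinr : inr ≫ d = 0)
    {w : f ≫ inl ≫ d = 0} (hd : IsColimit (CokernelCofork.ofπ (inl ≫ d) w)) :
    Nonempty (IsColimit (CokernelCofork.ofπ d hinr)) := by
  have : Epi (inl ≫ d) := epi_of_isColimit_cofork hd
  have : Epi d := epi_of_epi inl d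
  refine ⟨CokernelCofork.IsColimit.ofπ' d hinr fun x hx ↦ ?_⟩
  have hfx : f ≫ inl ≫ x = 0 := by rw [sq.w_assoc, hx, comp_zero]
  obtain ⟨l, hl⟩ := CokernelCofork.IsColimit.desc' hd (inl ≫ x) hfx
  exact ⟨l, sq.hom_ext (by simpa using hl) (by simp [reassoc_of% hinr, hx])⟩

end ZeroMorphisms

section Preadditive

variable {D : Type*} [Category* D] [Preadditive D]

lemma isPushout_comp_inl_lift {A B X Z : D} [HasBinaryBiproduct X Z] {i : A ⟶ B} (j : B ⟶ X)
    {k : B ⟶ Z} {w : i ≫ k = 0} (hk : IsColimit (CokernelCofork.ofπ k w)) :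
    IsPushout (i ≫ j) i biprod.inl (biprod.lift j k) := by
  have : Epi k := epi_of_isColimit_cofork hk
  have comm : (i ≫ j) ≫ biprod.inl = i ≫ biprod.lift j k := by ext <;> simp [w]
  have exists_desc {T : D} (a : X ⟶ T) (b : B ⟶ T) (h : (i ≫ j) ≫ a = i ≫ b) :
      ∃ m : X ⊞ Z ⟶ T, biprod.inl ≫ m = a ∧ biprod.lift j k ≫ m = b := by
    obtain ⟨c : Z ⟶ T, hc : k ≫ c = b - j ≫ a⟩ :=
      CokernelCofork.IsColimit.desc' hk (b - j ≫ a) (by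
        rw [Preadditive.comp_sub, ← h, Category.assoc, sub_self])
    exact ⟨biprod.desc a c, biprod.inl_desc a c, by simp [hc]⟩
  have hom_ext {T : D} (m m' : X ⊞ Z ⟶ T) (hinl : biprod.inl ≫ m = biprod.inl ≫ m')
      (hlift : biprod.lift j k ≫ m = biprod.lift j k ≫ m') : m = m' := by
    have k_inr : k ≫ biprod.inr = biprod.lift j k - j ≫ (biprod.inl : X ⟶ X ⊞ Z) := by
      ext <;> simp
    refine biprod.hom_ext' _ _ hinl ?_
    rw [← cancel_epi k, reassoc_of% k_inr, reassoc_of% k_inr]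
    simp [Preadditive.sub_comp, hinl, hlift]
  choose desc inl_desc lift_desc using @exists_desc
  exact ⟨⟨comm⟩, ⟨PushoutCocone.IsColimit.mk comm (fun s ↦ desc s.inl s.inr s.condition)
    (fun s ↦ inl_desc _ _ s.condition) (fun s ↦ lift_desc _ _ s.condition)
    fun s m hinl hlift ↦ hom_ext _ _ (by rw [hinl, inl_desc]) (by rw [hlift, lift_desc])⟩⟩

end Preadditive

namespace WeaklyExactStructure

variable (𝒲 : WeaklyExactStructure C)

lemma W_of_arrowIso_of_isCokernel {A B Z A' B' Z' : C} {i : A ⟶ B} {d : B ⟶ Z} {i' : A' ⟶ B'}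
    {d' : B' ⟶ Z'} (hW : 𝒲.W i d) (e : Arrow.mk i ≅ Arrow.mk i') {w : i' ≫ d' = 0}
    (hd' : IsColimit (CokernelCofork.ofπ d' w)) : 𝒲.W i' d' := by
  obtain ⟨hd⟩ := (𝒲.kc_of_mem hW).isCokernel
  exact 𝒲.iso_closed hW ⟨Arrow.leftFunc.mapIso e, Arrow.rightFunc.mapIso e,
    CokernelCofork.mapIsoOfIsColimit hd hd' e, e.hom.w.symm,
    CokernelCofork.π_mapOfIsColimit hd _ e.hom⟩

lemma W_of_arrowIso_of_isKernel {A B Z A' B' Z' : C} {i : A ⟶ B} {d : B ⟶ Z} {i' : A' ⟶ B'}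
    {d' : B' ⟶ Z'} (hW : 𝒲.W i d) (e : Arrow.mk d ≅ Arrow.mk d') {w : i' ≫ d' = 0}
    (hi' : IsLimit (KernelFork.ofι i' w)) : 𝒲.W i' d' := by
  obtain ⟨hi⟩ := (𝒲.kc_of_mem hW).isKernel
  exact 𝒲.iso_closed hW ⟨KernelFork.mapIsoOfIsLimit hi hi' e, Arrow.leftFunc.mapIso e,
    Arrow.rightFunc.mapIso e, (KernelFork.mapOfIsLimit_ι (.ofι i _) hi' e.hom).symm, e.hom.w.symm⟩

lemma W_of_isPushout {A B Z A' S : C} {i : A ⟶ B} {d : B ⟶ Z} (hW : 𝒲.W i d) {t : A ⟶ A'}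
    {g : B ⟶ S} {i' : A' ⟶ S} (sq : IsPushout i t g i') {d' : S ⟶ Z} (hd : g ≫ d' = d)
    (w : i' ≫ d' = 0) : 𝒲.W i' d' := by
  obtain ⟨_, _, i₀, sq₀, _, _, hW₀⟩ := 𝒲.pushout_mem hW t
  subst hd
  obtain ⟨hd⟩ := (𝒲.kc_of_mem hW).isCokernel
  obtain ⟨hd'⟩ := isCokernel_inr_of_isPushout sq w hd
  have e : Arrow.mk i₀ ≅ Arrow.mk i' :=
    Arrow.isoMk (Iso.refl A') (sq₀.isoIsPushout _ _ sq) (by simp)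
  exact 𝒲.W_of_arrowIso_of_isCokernel hW₀ e hd'

lemma W_of_isPullback {A B Z D P : C} {i : A ⟶ B} {d : B ⟶ Z} (hW : 𝒲.W i d) {t : D ⟶ Z}
    {p : P ⟶ B} {q : P ⟶ D} (sq : IsPullback p q d t) {i' : A ⟶ P} (hi : i' ≫ p = i)
    (w : i' ≫ q = 0) : 𝒲.W i' q := by
  obtain ⟨_, _, q₀, sq₀, _, _, hW₀⟩ := 𝒲.pullback_mem hW t
  subst hi
  obtain ⟨hi⟩ := (𝒲.kc_of_mem hW).isKernel
  obtain ⟨hi'⟩ := isKernel_snd_of_isPullback sq w hi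
  have e : Arrow.mk q₀ ≅ Arrow.mk q :=
    Arrow.isoMk (sq₀.isoIsPullback _ _ sq) (Iso.refl D) (by simp)
  exact 𝒲.W_of_arrowIso_of_isKernel hW₀ e hi'

lemma isPullback_of_W_comp {A B X Y Z : C} {i : A ⟶ B} {j : B ⟶ X} {p : X ⟶ Y}
    (hW : 𝒲.W (i ≫ j) p) {k : B ⟶ Z} {w : i ≫ k = 0} (hk : IsColimit (CokernelCofork.ofπ k w))
    {u : Z ⟶ Y} (hu : j ≫ p = k ≫ u) : IsPullback j k p u := by
  have sq : CommSq j k p u := ⟨hu⟩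
  have lift_mem : 𝒲.W (biprod.lift j k) (biprod.desc p (-u)) :=
    𝒲.W_of_isPushout hW (isPushout_comp_inl_lift j hk) (biprod.inl_desc _ _) (by simp [hu])
  obtain ⟨hlift⟩ := (𝒲.kc_of_mem lift_mem).isKernel
  exact ⟨sq, ⟨sq.isLimitEquivIsLimitKernelFork.symm hlift⟩⟩

end WeaklyExactStructure

/-- Quillen's obscure axiom for weakly exact structures, monic version. -/
theorem statement0 (𝒲 : WeaklyExactStructure C) {A B X : C} (i : A ⟶ B) (j : B ⟶ X)
    (hcoker : AdmitsCokernel i) (hji : AdmissibleMonic 𝒲 (i ≫ j)) :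
    AdmissibleMonic 𝒲 i := by
  obtain ⟨Z, k, w, ⟨hk⟩⟩ := hcoker
  obtain ⟨Y, p, hW⟩ := hji
  have hjp : i ≫ j ≫ p = 0 := by simpa using (𝒲.kc_of_mem hW).w
  obtain ⟨u, hu : k ≫ u = j ≫ p⟩ := CokernelCofork.IsColimit.desc' hk (j ≫ p) hjp
  exact ⟨Z, k, 𝒲.W_of_isPullback hW (𝒲.isPullback_of_W_comp hW hk hu.symm) rfl w⟩

end Statement

end WeaklyExactPaper
end

section
/- Let 𝒲 be a weakly exact structure on an additive category 𝒜. If f : X ⟶ Y and g : Y ⟶ Z are morphisms of 𝒜 such that g admits a kernel and the composite g ∘ f is an admissible epic of 𝒲, then g is an admissible epic of 𝒲 (Quillen's obscure axiom for weakly exact structures, epic version). -/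
/-!
Let `k : K ⟶ Y` be a kernel of `g` and `i : A ⟶ X` the `𝒲`-kernel of `f ≫ g`. The pullback of
`f ≫ g` along `g` is `(f, k) : X ⊞ K ⟶ Y`, since for morphisms `a` to `X` and `b` to `Y` that agree
in `Z` the difference `b - a ≫ f` factors through `k`. By (E2)ᵒᵖ this is an admissible epic, hence a
cokernel of its kernel `(i, -u) : A ⟶ X ⊞ K`, where `u : A ⟶ K` is induced by `f`. Thus the pullback
square with sides `i`, `u`, `f`, `k` is also a pushout, and (E2) makes `k` an admissible monic. In
a pushout square parallel morphisms have the same cokernel, so `g` is a cokernel of `k`.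
-/

open CategoryTheory CategoryTheory.Limits ZeroObject

universe w v u

namespace WeaklyExactPaper

section Statement

variable {C : Type u} [Category.{v} C] [Preadditive C] [HasZeroObject C] [HasBinaryBiproducts C]

section

variable {D : Type u} [Category.{v} D] [HasZeroMorphisms D] {A K X Y Z : D} {i : A ⟶ X}
  {u : A ⟶ K} {f : X ⟶ Y} {k : K ⟶ Y} {g : Y ⟶ Z} {wi : i ≫ f ≫ g = 0}

lemma isPullback_of_isLimit_kernelFork_comp [Mono k] (sq : CommSq i u f k) (wk : k ≫ g = 0)
    (hi : IsLimit (KernelFork.ofι i wi)) : IsPullback i u f k := by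
  have lift_comp_eq_fst (s : PullbackCone f k) :
      ∃ l : s.pt ⟶ A, l ≫ i = s.fst :=
    ⟨_, (KernelFork.IsLimit.lift' hi s.fst (by rw [s.condition_assoc, wk, comp_zero])).2⟩
  choose l hl using lift_comp_eq_fst
  refine ⟨sq, ⟨PullbackCone.IsLimit.mk _ l hl (fun s ↦ ?_) (fun s m hm _ ↦ ?_)⟩⟩
  · rw [← cancel_mono k, Category.assoc, ← sq.w, ← s.condition, reassoc_of% hl]
  · exact Fork.IsLimit.hom_ext hi (hm.trans (hl s).symm)

lemma nonempty_isColimit_cokernelCofork_of_isPushout (h : IsPushout i u f k) (wk : k ≫ g = 0)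
    (hg : IsColimit (CokernelCofork.ofπ (f ≫ g) wi)) :
    Nonempty (IsColimit (CokernelCofork.ofπ g wk)) := by
  have : Epi (f ≫ g) := epi_of_isColimit_cofork hg
  have : Epi g := epi_of_epi f g
  refine ⟨CokernelCofork.IsColimit.ofπ' g wk fun t ht ↦ ?_⟩
  let l := CokernelCofork.IsColimit.desc' hg (f ≫ t) (by rw [h.w_assoc, ht, comp_zero])
  refine ⟨l.1, h.hom_ext ?_ ?_⟩
  · simpa using l.2
  · rw [reassoc_of% wk, ht, zero_comp]

end

section

variable {D : Type u} [Category.{v} D] [Preadditive D] {A K X Y Z : D} [HasBinaryBiproduct X K]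
  {i : A ⟶ X} {u : A ⟶ K} {f : X ⟶ Y} {k : K ⟶ Y} {g : Y ⟶ Z}

lemma isPullback_biprod_fst_desc {wk : k ≫ g = 0} (hk : IsLimit (KernelFork.ofι k wk)) :
    IsPullback biprod.fst (biprod.desc f k) (f ≫ g) g := by
  have : Mono k := mono_of_isLimit_fork hk
  have difference_factors (s : PullbackCone (f ≫ g) g) :
      ∃ r : s.pt ⟶ K, r ≫ k = s.snd - s.fst ≫ f :=
    ⟨_, (KernelFork.IsLimit.lift' hk (s.snd - s.fst ≫ f) (by simp [s.condition])).2⟩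
  choose r hr using difference_factors
  refine ⟨⟨by ext <;> simp [wk]⟩, ⟨PullbackCone.IsLimit.mk _ (fun s ↦ biprod.lift s.fst (r s))
    (fun s ↦ biprod.lift_fst _ _) (fun s ↦ ?_) (fun s m hfst hsnd ↦ ?_)⟩⟩
  · rw [biprod.lift_desc, hr, add_sub_cancel]
  · have m_snd : m ≫ biprod.snd = r s := by
      rw [← cancel_mono k, hr, ← hfst, ← hsnd, biprod.desc_eq]
      simp
    ext
    · rw [hfst, biprod.lift_fst]
    · rw [m_snd, biprod.lift_snd]

lemma nonempty_isLimit_kernelFork_biprod_lift_neg (h : IsPullback i u f k) :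
    Nonempty (IsLimit (KernelFork.ofι (biprod.lift i (-u)) h.cokernelCofork.condition)) := by
  have : Mono (biprod.lift i (-u)) := ⟨fun a b hab ↦ h.hom_ext
    (by simpa using hab =≫ biprod.fst) (by simpa using hab =≫ biprod.snd)⟩
  refine ⟨KernelFork.IsLimit.ofι' _ _ fun t ht ↦ ?_⟩
  have components_agree : (t ≫ biprod.fst) ≫ f = (-(t ≫ biprod.snd)) ≫ k := by
    simpa [biprod.desc_eq, add_eq_zero_iff_eq_neg] using ht
  exact ⟨h.lift _ _ components_agree, by ext <;> simp⟩

end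

section

variable {𝒲 : WeaklyExactStructure C}

lemma AdmissibleEpic.of_isPullback {P B D Z : C} {p : P ⟶ B} {q : P ⟶ D} {d : B ⟶ Z} {t : D ⟶ Z}
    (hd : AdmissibleEpic 𝒲 d) (h : IsPullback p q d t) : AdmissibleEpic 𝒲 q := by
  obtain ⟨_, i, hi⟩ := hd
  obtain ⟨P', p', q', h', A', i', hi'⟩ := 𝒲.pullback_mem hi t
  let e : P' ≅ P := h'.isoIsPullback _ _ h
  exact ⟨A', i' ≫ e.hom, 𝒲.iso_closed hi' ⟨Iso.refl _, e, Iso.refl _, by simp, by simp [e]⟩⟩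

lemma AdmissibleMonic.of_isPushout {A B A' S : C} {i : A ⟶ B} {t : A ⟶ A'} {b : B ⟶ S}
    {j : A' ⟶ S} (hi : AdmissibleMonic 𝒲 i) (h : IsPushout i t b j) : AdmissibleMonic 𝒲 j := by
  obtain ⟨_, d, hd⟩ := hi
  obtain ⟨S', b', j', h', Z', d', hd'⟩ := 𝒲.pushout_mem hd t
  let e : S' ≅ S := h'.isoIsPushout _ _ h
  exact ⟨Z', e.inv ≫ d', 𝒲.iso_closed hd' ⟨Iso.refl _, e, Iso.refl _, by simp [e], by simp⟩⟩

lemma AdmissibleEpic.mem_of_isLimit {A B Z : C} {i : A ⟶ B} {d : B ⟶ Z} {w : i ≫ d = 0}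
    (hd : AdmissibleEpic 𝒲 d) (hi : IsLimit (KernelFork.ofι i w)) : 𝒲.W i d := by
  obtain ⟨A', i', hi'⟩ := hd
  obtain ⟨_, ⟨hi'_ker⟩, -⟩ := 𝒲.kc_of_mem hi'
  let e : A' ≅ A := hi'_ker.conePointUniqueUpToIso hi
  have e_comp : e.hom ≫ i = i' := hi'_ker.conePointUniqueUpToIso_hom_comp hi .zero
  exact 𝒲.iso_closed hi' ⟨e, Iso.refl _, Iso.refl _, by simp [e_comp], by simp⟩

lemma AdmissibleMonic.mem_of_isColimit {A B Z : C} {i : A ⟶ B} {d : B ⟶ Z} {w : i ≫ d = 0}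
    (hi : AdmissibleMonic 𝒲 i) (hd : IsColimit (CokernelCofork.ofπ d w)) : 𝒲.W i d := by
  obtain ⟨Z', d', hd'⟩ := hi
  obtain ⟨_, -, ⟨hd'_coker⟩⟩ := 𝒲.kc_of_mem hd'
  let e : Z' ≅ Z := hd'_coker.coconePointUniqueUpToIso hd
  have comp_e : d' ≫ e.hom = d := hd'_coker.comp_coconePointUniqueUpToIso_hom hd .one
  exact 𝒲.iso_closed hd' ⟨Iso.refl _, Iso.refl _, e, by simp, by simp [comp_e]⟩

lemma AdmissibleEpic.isPushout_of_isPullback {A K X Y : C} {i : A ⟶ X} {u : A ⟶ K} {f : X ⟶ Y}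
    {k : K ⟶ Y} (hfk : AdmissibleEpic 𝒲 (biprod.desc f k)) (h : IsPullback i u f k) :
    IsPushout i u f k := by
  obtain ⟨hker⟩ := nonempty_isLimit_kernelFork_biprod_lift_neg h
  obtain ⟨_, -, ⟨hcoker⟩⟩ := 𝒲.kc_of_mem (hfk.mem_of_isLimit hker)
  exact ⟨h.toCommSq, ⟨h.isColimitEquivIsColimitCokernelCofork.symm hcoker⟩⟩

end

/-- Quillen's obscure axiom for weakly exact structures, epic version. -/
theorem statement1 (𝒲 : WeaklyExactStructure C) {X Y Z : C} (f : X ⟶ Y) (g : Y ⟶ Z)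
    (hker : AdmitsKernel g) (hgf : AdmissibleEpic 𝒲 (f ≫ g)) :
    AdmissibleEpic 𝒲 g := by
  obtain ⟨K, k, wk, ⟨hk⟩⟩ := hker
  obtain ⟨A, i, hi⟩ := hgf
  obtain ⟨wi, ⟨hi_ker⟩, ⟨hfg_coker⟩⟩ := 𝒲.kc_of_mem hi
  have : Mono k := mono_of_isLimit_fork hk
  obtain ⟨u, hu : u ≫ k = i ≫ f⟩ := KernelFork.IsLimit.lift' hk (i ≫ f) (by simpa using wi)
  have pullback : IsPullback i u f k :=
    isPullback_of_isLimit_kernelFork_comp ⟨hu.symm⟩ wk hi_ker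
  have desc_epic : AdmissibleEpic 𝒲 (biprod.desc f k) :=
    AdmissibleEpic.of_isPullback ⟨A, i, hi⟩ (isPullback_biprod_fst_desc hk)
  have pushout : IsPushout i u f k := desc_epic.isPushout_of_isPullback pullback
  have k_monic : AdmissibleMonic 𝒲 k := AdmissibleMonic.of_isPushout ⟨Z, f ≫ g, hi⟩ pushout
  obtain ⟨hg_coker⟩ := nonempty_isColimit_cokernelCofork_of_isPushout pushout wk hfg_coker
  exact ⟨K, k, k_monic.mem_of_isColimit hg_coker⟩

end Statement

end WeaklyExactPaper
end

section
/- Let 𝒲 be a weakly exact structure on an additive category 𝒜 and let (a, b, c) be a morphism of admissible short exact sequences from (i : A ⟶ B, p : B ⟶ C) ∈ 𝒲 to (i' : A' ⟶ B', p' : B' ⟶ C') ∈ 𝒲, i.e. i' ∘ a = b ∘ i and p' ∘ b = c ∘ p. Then there exist a pair (j : A' ⟶ E, q : E ⟶ C) ∈ 𝒲 and morphisms b₁ : B ⟶ E and b₂ : E ⟶ B' such that b = b₂ ∘ b₁, j ∘ a = b₁ ∘ i, q ∘ b₁ = p, b₂ ∘ j = i', p' ∘ b₂ = c ∘ q, the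 commutative square with sides i, a, b₁, j is bicartesian, and the commutative square with sides q, b₂, c, p' is bicartesian. -/
open CategoryTheory CategoryTheory.Limits ZeroObject

universe w v u

namespace WeaklyExactPaper

section Statement

variable {C : Type u} [Category.{v} C] [Preadditive C] [HasZeroObject C] [HasBinaryBiproducts C]

/-!
Pushing `(i, p)` out along `a` gives the intermediate pair `(j, q)`, and `b` factors through the
pushout. A kernel or a cokernel is a pullback or a pushout along a zero object, so pasting of
squares shows that the top-left square is a pullback and that the bottom-right one is a pushout.
That the bottom-right square is also a pullback does not follow from pasting. There, given
`x : T ⟶ Z` and `y : T ⟶ B'` with `x ≫ c = y ≫ p'`, one pulls `q` back along `x`, solves the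
lifting problem over the resulting cover `P ⟶ T`, and descends: since `(q, b₂)` is jointly monic,
a solution over `P` is killed by the kernel of `P ⟶ T`.
-/

section ZeroMorphisms

variable {D : Type*} [Category* D] [HasZeroMorphisms D] [HasZeroObject D]

theorem isPullback_zero_of_isLimit_kernelFork {A B Z : D} {i : A ⟶ B} {d : B ⟶ Z}
    {w : i ≫ d = 0} (hi : IsLimit (KernelFork.ofι i w)) :
    IsPullback i (0 : A ⟶ 0) d (0 : 0 ⟶ Z) := by
  have : Mono i := mono_of_isLimit_fork hi
  refine .mk' (by rw [w, comp_zero]) (fun _ _ _ h _ => (cancel_mono i).1 h) fun _ x _ h => ?_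
  obtain ⟨l, hl⟩ := KernelFork.IsLimit.lift' hi x (by rw [h, comp_zero])
  exact ⟨l, hl, (isZero_zero D).eq_of_tgt _ _⟩

theorem isPushout_zero_iff_isColimit_cokernelCofork {A B Z : D} {i : A ⟶ B} {d : B ⟶ Z}
    (w : i ≫ d = 0) :
    IsPushout i (0 : A ⟶ 0) d (0 : 0 ⟶ Z) ↔ Nonempty (IsColimit (CokernelCofork.ofπ d w)) := by
  refine ⟨fun sq => ?_, fun ⟨hd⟩ => ?_⟩
  · have : Epi d := ⟨fun _ _ h => sq.hom_ext h ((isZero_zero D).eq_of_src _ _)⟩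
    have exists_desc {T : D} (x : B ⟶ T) (hx : i ≫ x = 0) : ∃ l : Z ⟶ T, d ≫ l = x :=
      (sq.exists_desc x 0 (by rw [hx, comp_zero])).imp fun _ => And.left
    choose desc fac using @exists_desc
    exact ⟨CokernelCofork.IsColimit.ofπ d w desc fac
      fun x hx _ hm => (cancel_epi d).1 (hm.trans (fac x hx).symm)⟩
  · have : Epi d := epi_of_isColimit_cofork hd
    refine .mk' (by rw [w, zero_comp]) (fun _ _ _ h _ => (cancel_epi d).1 h) fun _ x _ h => ?_
    obtain ⟨l, hl⟩ := CokernelCofork.IsColimit.desc' hd x (by rw [h, zero_comp])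
    exact ⟨l, hl, (isZero_zero D).eq_of_src _ _⟩

theorem nonempty_isColimit_cokernelCofork_of_isPushout_s3 {A B Z A' E : D} {i : A ⟶ B} {p : B ⟶ Z}
    {a : A ⟶ A'} {b : B ⟶ E} {j : A' ⟶ E} {q : E ⟶ Z} (sq : IsPushout i a b j)
    {wp : i ≫ p = 0} (hp : IsColimit (CokernelCofork.ofπ p wp))
    (hbq : b ≫ q = p) (wq : j ≫ q = 0) :
    Nonempty (IsColimit (CokernelCofork.ofπ q wq)) := by
  have outer := (isPushout_zero_iff_isColimit_cokernelCofork wp).2 ⟨hp⟩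
  rw [← isPushout_zero_iff_isColimit_cokernelCofork]
  exact .of_top (by simpa only [hbq, comp_zero] using outer) (by rw [wq, zero_comp]) sq

theorem isPullback_of_isLimit_kernelFork {A B Z A' E : D} {i : A ⟶ B} {p : B ⟶ Z}
    {a : A ⟶ A'} {b : B ⟶ E} {j : A' ⟶ E} {q : E ⟶ Z}
    {wp : i ≫ p = 0} (hi : IsLimit (KernelFork.ofι i wp))
    {wq : j ≫ q = 0} (hj : IsLimit (KernelFork.ofι j wq))
    (hbq : b ≫ q = p) (w : i ≫ b = a ≫ j) : IsPullback i a b j := by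
  have outer := isPullback_zero_of_isLimit_kernelFork hi
  exact .of_bot (by simpa only [hbq, comp_zero] using outer) w
    (isPullback_zero_of_isLimit_kernelFork hj)

theorem isPushout_of_isColimit_cokernelCofork {A E Z B' Z' : D} {j : A ⟶ E} {q : E ⟶ Z}
    {i' : A ⟶ B'} {p' : B' ⟶ Z'} {b : E ⟶ B'} {c : Z ⟶ Z'}
    {wq : j ≫ q = 0} (hq : IsColimit (CokernelCofork.ofπ q wq))
    {wp' : i' ≫ p' = 0} (hp' : IsColimit (CokernelCofork.ofπ p' wp'))
    (hjb : j ≫ b = i') (w : q ≫ c = b ≫ p') : IsPushout q b c p' := by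
  have left := (isPushout_zero_iff_isColimit_cokernelCofork wq).2 ⟨hq⟩
  have outer := (isPushout_zero_iff_isColimit_cokernelCofork wp').2 ⟨hp'⟩
  exact (IsPushout.of_left (by simpa only [hjb, zero_comp] using outer) w.symm left).flip

end ZeroMorphisms

theorem eq_of_isLimit_kernelFork_of_mono_comp {D : Type*} [Category* D] [Preadditive D]
    {A E Z B' T : D} {j : A ⟶ E} {q : E ⟶ Z} {b : E ⟶ B'} {w : j ≫ q = 0}
    (hj : IsLimit (KernelFork.ofι j w)) [Mono (j ≫ b)] {x y : T ⟶ E}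
    (hq : x ≫ q = y ≫ q) (hb : x ≫ b = y ≫ b) : x = y := by
  obtain ⟨n, hn : n ≫ j = x - y⟩ := KernelFork.IsLimit.lift' hj (x - y) <| by
    rw [Preadditive.sub_comp, hq, sub_self]
  have hn_zero : n = 0 := zero_of_comp_mono (j ≫ b) <| by
    rw [reassoc_of% hn, Preadditive.sub_comp, hb, sub_self]
  rw [← sub_eq_zero, ← hn, hn_zero, zero_comp]

namespace WeaklyExactStructure

variable (𝒲 : WeaklyExactStructure C)

theorem mem_of_isColimit_cokernelCofork {A B Z Z' : C} {i : A ⟶ B} {d : B ⟶ Z} {q : B ⟶ Z'}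
    (h : 𝒲.W i d) {w : i ≫ q = 0} (hq : IsColimit (CokernelCofork.ofπ q w)) : 𝒲.W i q := by
  obtain ⟨_, -, ⟨hd⟩⟩ := 𝒲.kc_of_mem h
  refine 𝒲.iso_closed h ⟨Iso.refl A, Iso.refl B, hd.coconePointUniqueUpToIso hq, by simp, ?_⟩
  simpa using hd.comp_coconePointUniqueUpToIso_hom hq WalkingParallelPair.one

theorem exists_isPushout_mem {A B Z A' : C} {i : A ⟶ B} {p : B ⟶ Z} (h : 𝒲.W i p) (a : A ⟶ A') :
    ∃ (E : C) (b : B ⟶ E) (j : A' ⟶ E) (q : E ⟶ Z),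
      IsPushout i a b j ∧ b ≫ q = p ∧ 𝒲.W j q := by
  obtain ⟨wp, -, ⟨hp⟩⟩ := 𝒲.kc_of_mem h
  obtain ⟨E, b, j, sq, _, _, hd⟩ := 𝒲.pushout_mem h a
  obtain ⟨q, hbq, hjq⟩ := sq.exists_desc p 0 (by rw [wp, comp_zero])
  obtain ⟨hq⟩ := nonempty_isColimit_cokernelCofork_of_isPushout_s3 sq hp hbq hjq
  exact ⟨E, b, j, q, sq, hbq, 𝒲.mem_of_isColimit_cokernelCofork hd hq⟩

theorem isPullback_of_mem_of_isLimit_kernelFork {A E Z B' Z' : C} {j : A ⟶ E} {q : E ⟶ Z}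
    {i' : A ⟶ B'} {p' : B' ⟶ Z'} {b : E ⟶ B'} {c : Z ⟶ Z'} (h : 𝒲.W j q)
    {wp' : i' ≫ p' = 0} (hi' : IsLimit (KernelFork.ofι i' wp'))
    (hjb : j ≫ b = i') (w : q ≫ c = b ≫ p') : IsPullback q b c p' := by
  obtain ⟨wq, ⟨hj⟩, -⟩ := 𝒲.kc_of_mem h
  have : Mono (j ≫ b) := hjb ▸ mono_of_isLimit_fork hi'
  refine .mk' w (fun _ _ _ => eq_of_isLimit_kernelFork_of_mono_comp hj) fun T x y hxy => ?_
  obtain ⟨P, e, t, sq, _, k, hk⟩ := 𝒲.pullback_mem h x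
  obtain ⟨wt, -, ⟨ht⟩⟩ := 𝒲.kc_of_mem hk
  have : Epi t := epi_of_isColimit_cofork ht
  -- `e` lifts `t ≫ x` along `q`; subtracting `r ≫ j` makes it lift `t ≫ y` along `b` as well.
  obtain ⟨r, hr : r ≫ i' = e ≫ b - t ≫ y⟩ := KernelFork.IsLimit.lift' hi' (e ≫ b - t ≫ y) <| by
    rw [Preadditive.sub_comp, Category.assoc, Category.assoc, ← w, ← hxy, sq.w_assoc, sub_self]
  have lift_q : (e - r ≫ j) ≫ q = t ≫ x := by
    rw [Preadditive.sub_comp, Category.assoc, wq, comp_zero, sub_zero, sq.w]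
  have lift_b : (e - r ≫ j) ≫ b = t ≫ y := by
    rw [Preadditive.sub_comp, Category.assoc, hjb, hr, sub_sub_cancel]
  have comp_lift : k ≫ (e - r ≫ j) = 0 := eq_of_isLimit_kernelFork_of_mono_comp hj
    (by rw [Category.assoc, lift_q, reassoc_of% wt, zero_comp, zero_comp])
    (by rw [Category.assoc, lift_b, reassoc_of% wt, zero_comp, zero_comp])
  obtain ⟨l, hl : t ≫ l = e - r ≫ j⟩ := CokernelCofork.IsColimit.desc' ht _ comp_lift
  exact ⟨l, by rw [← cancel_epi t, reassoc_of% hl, lift_q],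
    by rw [← cancel_epi t, reassoc_of% hl, lift_b]⟩

end WeaklyExactStructure

theorem statement3_general (𝒲 : WeaklyExactStructure C)
    {A B Z A' B' Z' : C} {i : A ⟶ B} {p : B ⟶ Z} {i' : A' ⟶ B'} {p' : B' ⟶ Z'}
    (h : 𝒲.W i p) (h' : IsKernelCokernelPair i' p')
    (a : A ⟶ A') (b : B ⟶ B') (c : Z ⟶ Z')
    (hsq1 : a ≫ i' = i ≫ b) (hsq2 : b ≫ p' = p ≫ c) :
    ∃ (E : C) (j : A' ⟶ E) (q : E ⟶ Z), 𝒲.W j q ∧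
      ∃ (b₁ : B ⟶ E) (b₂ : E ⟶ B'),
        b = b₁ ≫ b₂ ∧ a ≫ j = i ≫ b₁ ∧ b₁ ≫ q = p ∧ j ≫ b₂ = i' ∧ b₂ ≫ p' = q ≫ c ∧
        IsPushout i a b₁ j ∧ IsPullback i a b₁ j ∧
        IsPushout q b₂ c p' ∧ IsPullback q b₂ c p' := by
  obtain ⟨E, b₁, j, q, sq, hb₁q, hjq⟩ := 𝒲.exists_isPushout_mem h a
  obtain ⟨_, ⟨hi⟩, -⟩ := 𝒲.kc_of_mem h
  obtain ⟨wq, ⟨hj⟩, ⟨hq⟩⟩ := 𝒲.kc_of_mem hjq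
  obtain ⟨wp', ⟨hi'⟩, ⟨hp'⟩⟩ := h'
  obtain ⟨b₂, hb, hjb₂⟩ := sq.exists_desc b i' hsq1.symm
  have w : q ≫ c = b₂ ≫ p' := sq.hom_ext
    (by rw [reassoc_of% hb₁q, reassoc_of% hb, hsq2])
    (by rw [reassoc_of% wq, reassoc_of% hjb₂, wp', zero_comp])
  exact ⟨E, j, q, hjq, b₁, b₂, hb.symm, sq.w.symm, hb₁q, hjb₂, w.symm, sq,
    isPullback_of_isLimit_kernelFork hi hj hb₁q sq.w,
    isPushout_of_isColimit_cokernelCofork hq hp' hjb₂ w,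
    𝒲.isPullback_of_mem_of_isLimit_kernelFork hjq hi' hjb₂ w⟩

/-- Every morphism of admissible short exact sequences of a weakly exact structure factors
through an admissible short exact sequence, with bicartesian top-left and bottom-right
squares. -/
theorem statement3 (𝒲 : WeaklyExactStructure C)
    {A B Z A' B' Z' : C} {i : A ⟶ B} {p : B ⟶ Z} {i' : A' ⟶ B'} {p' : B' ⟶ Z'}
    (h : 𝒲.W i p) (h' : 𝒲.W i' p')
    (a : A ⟶ A') (b : B ⟶ B') (c : Z ⟶ Z')
    (hsq1 : a ≫ i' = i ≫ b) (hsq2 : b ≫ p' = p ≫ c) :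
    ∃ (E : C) (j : A' ⟶ E) (q : E ⟶ Z), 𝒲.W j q ∧
      ∃ (b₁ : B ⟶ E) (b₂ : E ⟶ B'),
        b = b₁ ≫ b₂ ∧ a ≫ j = i ≫ b₁ ∧ b₁ ≫ q = p ∧ j ≫ b₂ = i' ∧ b₂ ≫ p' = q ≫ c ∧
        IsPushout i a b₁ j ∧ IsPullback i a b₁ j ∧
        IsPushout q b₂ c p' ∧ IsPullback q b₂ c p' :=
  statement3_general 𝒲 h (𝒲.kc_of_mem h') a b c hsq1 hsq2

end Statement

end WeaklyExactPaper
end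

section
/- Let 𝒜 be an additive category, let 𝓘 be a right weakly exact structure on 𝒜 and let 𝓓 be a left weakly exact structure on 𝒜. Then the class 𝒲 of all kernel–cokernel pairs (i, d) with i ∈ 𝓘 and d ∈ 𝓓 is a weakly exact structure on 𝒜. -/
open CategoryTheory CategoryTheory.Limits ZeroObject

universe w v u

namespace WeaklyExactPaper

section OneSided

variable {C : Type u} [Category.{v} C] [Preadditive C] [HasZeroObject C] [HasBinaryBiproducts C]

/-- A right weakly exact structure: a class of kernels closed under isomorphisms, containing
identities and zero monomorphisms `0 ⟶ X`, closed under pushouts (P), satisfying the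
cancellation axiom (Q) and closed under direct sums (S). -/
structure RightWeaklyExactStructure (C : Type u) [Category.{v} C] [Preadditive C]
    [HasZeroObject C] [HasBinaryBiproducts C] where
  I : ∀ ⦃A B : C⦄, (A ⟶ B) → Prop
  ker_of_mem : ∀ {A B : C} {f : A ⟶ B}, I f → IsSomeKernel f
  iso_closed : ∀ {A B A' B' : C} {f : A ⟶ B} {f' : A' ⟶ B'} (eA : A ≅ A') (eB : B ≅ B'),
    f ≫ eB.hom = eA.hom ≫ f' → I f → I f'
  id_mem : ∀ X : C, I (𝟙 X)
  zero_mem : ∀ X : C, I (0 : (0 : C) ⟶ X)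
  pushout_mem : ∀ {X Y X' : C} {f : X ⟶ Y}, I f → ∀ h : X ⟶ X',
    ∃ (Y' : C) (h' : Y ⟶ Y') (f' : X' ⟶ Y'), IsPushout f h h' f' ∧ I f'
  cancel_mem : ∀ {A B Z : C} (a : A ⟶ B) (b : B ⟶ Z), I (a ≫ b) → AdmitsCokernel a → I a
  sum_mem : ∀ {A B A' B' : C} {f : A ⟶ B} {f' : A' ⟶ B'}, I f → I f' → I (biprod.map f f')

/-- A left weakly exact structure: a class of cokernels closed under isomorphisms, containing
identities and zero epimorphisms `X ⟶ 0`, closed under pullbacks (Pᵒᵖ), satisfying the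
cancellation axiom (Qᵒᵖ) and closed under direct sums (Sᵒᵖ). -/
structure LeftWeaklyExactStructure (C : Type u) [Category.{v} C] [Preadditive C]
    [HasZeroObject C] [HasBinaryBiproducts C] where
  D : ∀ ⦃B Z : C⦄, (B ⟶ Z) → Prop
  coker_of_mem : ∀ {B Z : C} {g : B ⟶ Z}, D g → IsSomeCokernel g
  iso_closed : ∀ {B Z B' Z' : C} {g : B ⟶ Z} {g' : B' ⟶ Z'} (eB : B ≅ B') (eZ : Z ≅ Z'),
    g ≫ eZ.hom = eB.hom ≫ g' → D g → D g'
  id_mem : ∀ X : C, D (𝟙 X)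
  zero_mem : ∀ X : C, D (0 : X ⟶ (0 : C))
  pullback_mem : ∀ {B Z E : C} {f : B ⟶ Z}, D f → ∀ h : E ⟶ Z,
    ∃ (P : C) (p : P ⟶ B) (e : P ⟶ E), IsPullback p e f h ∧ D e
  cancel_mem : ∀ {A B Z : C} (a : A ⟶ B) (b : B ⟶ Z), D (a ≫ b) → AdmitsKernel b → D b
  sum_mem : ∀ {B Z B' Z' : C} {g : B ⟶ Z} {g' : B' ⟶ Z'}, D g → D g' → D (biprod.map g g')

end OneSided

section Statement

variable {C : Type u} [Category.{v} C] [Preadditive C] [HasZeroObject C] [HasBinaryBiproducts C]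

/-!
Let `(i, d)` be a kernel–cokernel pair with `i ∈ 𝓘` and `d ∈ 𝓓`, and let `i' ∈ 𝓘` be a pushout of
`i`, with `g : B ⟶ S` the other leg. The morphism `d' : S ⟶ Z` induced by `d` and `0` is a cokernel
of `i'`, and `i'`, being a kernel of some morphism, is a kernel of its own cokernel `d'`. Since
`g ≫ d' = d ∈ 𝓓` and `d'` admits a kernel, cancellation (Qᵒᵖ) in `𝓓` yields `d' ∈ 𝓓`. Pullbacks
are dual.
-/

section Kernels

variable {𝒜 : Type u} [Category.{v} 𝒜] [HasZeroMorphisms 𝒜]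

noncomputable def isLimitKernelForkBiprodMap {A₁ B₁ Z₁ A₂ B₂ Z₂ : 𝒜} [HasBinaryBiproduct A₁ A₂]
    [HasBinaryBiproduct B₁ B₂] [HasBinaryBiproduct Z₁ Z₂] {i₁ : A₁ ⟶ B₁} {d₁ : B₁ ⟶ Z₁}
    {i₂ : A₂ ⟶ B₂} {d₂ : B₂ ⟶ Z₂} {w₁ : i₁ ≫ d₁ = 0} {w₂ : i₂ ≫ d₂ = 0}
    (h₁ : IsLimit (KernelFork.ofι i₁ w₁)) (h₂ : IsLimit (KernelFork.ofι i₂ w₂)) :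
    IsLimit (KernelFork.ofι (f := biprod.map d₁ d₂) (biprod.map i₁ i₂)
      (by ext <;> simp [w₁, w₂])) :=
  have : Mono i₁ := Fork.IsLimit.mono h₁
  have : Mono i₂ := Fork.IsLimit.mono h₂
  KernelFork.IsLimit.ofι' _ _ fun k hk ↦
    let l₁ := KernelFork.IsLimit.lift' h₁ (k ≫ biprod.fst) (by simpa using hk =≫ biprod.fst)
    let l₂ := KernelFork.IsLimit.lift' h₂ (k ≫ biprod.snd) (by simpa using hk =≫ biprod.snd)
    ⟨biprod.lift l₁.1 l₂.1, biprod.hom_ext _ _ (by simpa using l₁.2) (by simpa using l₂.2)⟩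

noncomputable def isColimitCokernelCoforkBiprodMap {A₁ B₁ Z₁ A₂ B₂ Z₂ : 𝒜}
    [HasBinaryBiproduct A₁ A₂] [HasBinaryBiproduct B₁ B₂] [HasBinaryBiproduct Z₁ Z₂]
    {i₁ : A₁ ⟶ B₁} {d₁ : B₁ ⟶ Z₁} {i₂ : A₂ ⟶ B₂} {d₂ : B₂ ⟶ Z₂}
    {w₁ : i₁ ≫ d₁ = 0} {w₂ : i₂ ≫ d₂ = 0}
    (h₁ : IsColimit (CokernelCofork.ofπ d₁ w₁)) (h₂ : IsColimit (CokernelCofork.ofπ d₂ w₂)) :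
    IsColimit (CokernelCofork.ofπ (f := biprod.map i₁ i₂) (biprod.map d₁ d₂)
      (by ext <;> simp [w₁, w₂])) :=
  have : Epi d₁ := Cofork.IsColimit.epi h₁
  have : Epi d₂ := Cofork.IsColimit.epi h₂
  CokernelCofork.IsColimit.ofπ' _ _ fun k hk ↦
    let l₁ := CokernelCofork.IsColimit.desc' h₁ (biprod.inl ≫ k) (by simpa using biprod.inl ≫= hk)
    let l₂ := CokernelCofork.IsColimit.desc' h₂ (biprod.inr ≫ k) (by simpa using biprod.inr ≫= hk)
    ⟨biprod.desc l₁.1 l₂.1, biprod.hom_ext' _ _ (by simpa using l₁.2) (by simpa using l₂.2)⟩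

noncomputable def isColimitCokernelCoforkOfIsPushout {A B Z A' S : 𝒜} {i : A ⟶ B} {d : B ⟶ Z}
    {w : i ≫ d = 0} (hd : IsColimit (CokernelCofork.ofπ d w)) {t : A ⟶ A'} {g : B ⟶ S}
    {i' : A' ⟶ S} (sq : IsPushout i t g i') :
    IsColimit (CokernelCofork.ofπ (f := i') (sq.desc d 0 (by simp [w])) (sq.inr_desc _ _ _)) :=
  have : Epi d := Cofork.IsColimit.epi hd
  have : Epi (sq.desc d 0 (by simp [w])) := epi_of_epi_fac (sq.inl_desc d 0 (by simp [w]))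
  CokernelCofork.IsColimit.ofπ' _ _ fun k hk ↦
    let l := CokernelCofork.IsColimit.desc' hd (g ≫ k) (by rw [sq.w_assoc, hk, comp_zero])
    ⟨l.1, sq.hom_ext (by simpa using l.2) (by simp [hk])⟩

end Kernels

section KernelCokernelPairs

variable {𝒜 : Type u} [Category.{v} 𝒜] [Preadditive 𝒜]

theorem IsSomeCokernel.op {B Z : 𝒜} {d : B ⟶ Z} (hd : IsSomeCokernel d) : IsSomeKernel d.op := by
  obtain ⟨A, f, w, ⟨h⟩⟩ := hd
  exact ⟨_, f.op, _, ⟨CokernelCofork.IsColimit.ofπOp d w h⟩⟩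

theorem IsSomeKernel.isKernelCokernelPair {A B Z : 𝒜} {i : A ⟶ B} {d : B ⟶ Z} {w : i ≫ d = 0}
    (hi : IsSomeKernel i) (hd : IsColimit (CokernelCofork.ofπ d w)) :
    IsKernelCokernelPair i d := by
  obtain ⟨Y, y, hy, ⟨hi⟩⟩ := hi
  obtain ⟨l, hl : d ≫ l = y⟩ := CokernelCofork.IsColimit.desc' hd y hy
  refine ⟨w, ⟨KernelFork.isLimitOfIsLimitOfIff' hi d fun T f ↦ ⟨fun hf ↦ ?_, fun hf ↦ ?_⟩⟩, ⟨hd⟩⟩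
  · obtain ⟨m, rfl : m ≫ i = f⟩ := KernelFork.IsLimit.lift' hi f hf
    rw [Category.assoc, w, comp_zero]
  · rw [← hl, reassoc_of% hf, zero_comp]

namespace IsKernelCokernelPair

theorem op {A B Z : 𝒜} {i : A ⟶ B} {d : B ⟶ Z} (h : IsKernelCokernelPair i d) :
    IsKernelCokernelPair d.op i.op :=
  ⟨_, h.isCokernel.map (CokernelCofork.IsColimit.ofπOp d h.w),
    h.isKernel.map (KernelFork.IsLimit.ofιOp i h.w)⟩

theorem unop {A B Z : 𝒜ᵒᵖ} {i : A ⟶ B} {d : B ⟶ Z} (h : IsKernelCokernelPair i d) :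
    IsKernelCokernelPair d.unop i.unop :=
  ⟨_, h.isCokernel.map (CokernelCofork.IsColimit.ofπUnop d h.w),
    h.isKernel.map (KernelFork.IsLimit.ofιUnop i h.w)⟩

theorem of_pairIso {A B Z A' B' Z' : 𝒜} {i : A ⟶ B} {d : B ⟶ Z} {i' : A' ⟶ B'} {d' : B' ⟶ Z'}
    (h : IsKernelCokernelPair i d) (e : PairIso i d i' d') : IsKernelCokernelPair i' d' := by
  obtain ⟨eA, eB, eZ, hi, hd⟩ := e
  have w' : i' ≫ d' = 0 := by
    rw [← cancel_epi eA.hom, ← reassoc_of% hi, ← hd, reassoc_of% h.w, zero_comp, comp_zero]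
  exact ⟨w', h.isKernel.map (IsKernel.ofIso _ · _ eB eZ eA hd.symm hi.symm),
    h.isCokernel.map (IsCokernel.ofIso _ · _ eA eB eZ hi.symm (by exact hd.symm))⟩

theorem biprod_map {A₁ B₁ Z₁ A₂ B₂ Z₂ : 𝒜} [HasBinaryBiproduct A₁ A₂] [HasBinaryBiproduct B₁ B₂]
    [HasBinaryBiproduct Z₁ Z₂] {i₁ : A₁ ⟶ B₁} {d₁ : B₁ ⟶ Z₁} {i₂ : A₂ ⟶ B₂} {d₂ : B₂ ⟶ Z₂}
    (h₁ : IsKernelCokernelPair i₁ d₁) (h₂ : IsKernelCokernelPair i₂ d₂) :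
    IsKernelCokernelPair (biprod.map i₁ i₂) (biprod.map d₁ d₂) :=
  ⟨_, h₁.isKernel.map2 isLimitKernelForkBiprodMap h₂.isKernel,
    h₁.isCokernel.map2 isColimitCokernelCoforkBiprodMap h₂.isCokernel⟩

theorem id_zero (X : 𝒜) {Z : 𝒜} (hZ : IsZero Z) : IsKernelCokernelPair (𝟙 X) (0 : X ⟶ Z) :=
  ⟨comp_zero, ⟨KernelFork.IsLimit.ofId _ rfl⟩,
    ⟨CokernelCofork.IsColimit.ofEpiOfIsZero _ inferInstance hZ⟩⟩

theorem zero_id {A : 𝒜} (hA : IsZero A) (X : 𝒜) : IsKernelCokernelPair (0 : A ⟶ X) (𝟙 X) :=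
  ⟨zero_comp, ⟨KernelFork.IsLimit.ofMonoOfIsZero _ inferInstance hA⟩,
    ⟨CokernelCofork.IsColimit.ofId _ rfl⟩⟩

theorem exists_of_isPushout {A B Z A' S : 𝒜} {i : A ⟶ B} {d : B ⟶ Z} {t : A ⟶ A'} {g : B ⟶ S}
    {i' : A' ⟶ S} (h : IsKernelCokernelPair i d) (sq : IsPushout i t g i')
    (hi' : IsSomeKernel i') : ∃ d' : S ⟶ Z, g ≫ d' = d ∧ IsKernelCokernelPair i' d' := by
  obtain ⟨w, -, ⟨hd⟩⟩ := h
  exact ⟨_, sq.inl_desc _ _ _,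
    hi'.isKernelCokernelPair (isColimitCokernelCoforkOfIsPushout hd sq)⟩

theorem exists_of_isPullback {A B Z D P : 𝒜} {i : A ⟶ B} {d : B ⟶ Z} {t : D ⟶ Z} {p : P ⟶ B}
    {q : P ⟶ D} (h : IsKernelCokernelPair i d) (sq : IsPullback p q d t)
    (hq : IsSomeCokernel q) : ∃ i' : A ⟶ P, i' ≫ p = i ∧ IsKernelCokernelPair i' q := by
  obtain ⟨i', hi', h'⟩ := h.op.exists_of_isPushout sq.op.flip hq.op
  exact ⟨i'.unop, congrArg Quiver.Hom.unop hi', h'.unop⟩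

end IsKernelCokernelPair

end KernelCokernelPairs

/-- The class `𝒲` of kernel–cokernel pairs obtained by gluing a right weakly exact structure `ℛ`
and a left weakly exact structure `ℒ`. -/
structure IsGluedPair (ℛ : RightWeaklyExactStructure C) (ℒ : LeftWeaklyExactStructure C)
    {A B Z : C} (i : A ⟶ B) (d : B ⟶ Z) : Prop where
  isKernelCokernelPair : IsKernelCokernelPair i d
  mem_I : ℛ.I i
  mem_D : ℒ.D d

namespace IsGluedPair

variable {ℛ : RightWeaklyExactStructure C} {ℒ : LeftWeaklyExactStructure C}

theorem of_pairIso {A B Z A' B' Z' : C} {i : A ⟶ B} {d : B ⟶ Z} {i' : A' ⟶ B'} {d' : B' ⟶ Z'}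
    (h : IsGluedPair ℛ ℒ i d) (e : PairIso i d i' d') : IsGluedPair ℛ ℒ i' d' := by
  have hkc : IsKernelCokernelPair i' d' := h.isKernelCokernelPair.of_pairIso e
  obtain ⟨eA, eB, eZ, hi, hd⟩ := e
  exact ⟨hkc, ℛ.iso_closed eA eB hi h.mem_I, ℒ.iso_closed eB eZ hd h.mem_D⟩

theorem biprod_map {A₁ B₁ Z₁ A₂ B₂ Z₂ : C} {i₁ : A₁ ⟶ B₁} {d₁ : B₁ ⟶ Z₁} {i₂ : A₂ ⟶ B₂}
    {d₂ : B₂ ⟶ Z₂} (h₁ : IsGluedPair ℛ ℒ i₁ d₁) (h₂ : IsGluedPair ℛ ℒ i₂ d₂) :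
    IsGluedPair ℛ ℒ (biprod.map i₁ i₂) (biprod.map d₁ d₂) :=
  ⟨h₁.isKernelCokernelPair.biprod_map h₂.isKernelCokernelPair,
    ℛ.sum_mem h₁.mem_I h₂.mem_I, ℒ.sum_mem h₁.mem_D h₂.mem_D⟩

theorem exists_isPushout {A B Z A' : C} {i : A ⟶ B} {d : B ⟶ Z} (h : IsGluedPair ℛ ℒ i d)
    (t : A ⟶ A') : ∃ (S : C) (g : B ⟶ S) (i' : A' ⟶ S), IsPushout i t g i' ∧
      ∃ (Z' : C) (d' : S ⟶ Z'), IsGluedPair ℛ ℒ i' d' := by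
  obtain ⟨S, g, i', sq, hi'⟩ := ℛ.pushout_mem h.mem_I t
  obtain ⟨d', rfl, h'⟩ := h.isKernelCokernelPair.exists_of_isPushout sq (ℛ.ker_of_mem hi')
  have hd' : ℒ.D d' := ℒ.cancel_mem g d' h.mem_D ⟨_, i', h'.w, h'.isKernel⟩
  exact ⟨S, g, i', sq, Z, d', h', hi', hd'⟩

theorem exists_isPullback {A B Z D : C} {i : A ⟶ B} {d : B ⟶ Z} (h : IsGluedPair ℛ ℒ i d)
    (t : D ⟶ Z) : ∃ (P : C) (p : P ⟶ B) (q : P ⟶ D), IsPullback p q d t ∧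
      ∃ (A' : C) (i' : A' ⟶ P), IsGluedPair ℛ ℒ i' q := by
  obtain ⟨P, p, q, sq, hq⟩ := ℒ.pullback_mem h.mem_D t
  obtain ⟨i', rfl, h'⟩ := h.isKernelCokernelPair.exists_of_isPullback sq (ℒ.coker_of_mem hq)
  have hi' : ℛ.I i' := ℛ.cancel_mem i' p h.mem_I ⟨_, q, h'.w, h'.isCokernel⟩
  exact ⟨P, p, q, sq, A, i', h', hi', hq⟩

end IsGluedPair

/-- The weakly exact structure glued from a right weakly exact structure `ℛ` and a left weakly
exact structure `ℒ`; its class of pairs is `IsGluedPair ℛ ℒ`. -/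
def WeaklyExactStructure.glue (ℛ : RightWeaklyExactStructure C)
    (ℒ : LeftWeaklyExactStructure C) : WeaklyExactStructure C where
  W _ _ _ i d := IsGluedPair ℛ ℒ i d
  kc_of_mem h := h.isKernelCokernelPair
  iso_closed h e := h.of_pairIso e
  sum_mem h₁ h₂ := h₁.biprod_map h₂
  id_zero_mem X := ⟨.id_zero X (isZero_zero C), ℛ.id_mem X, ℒ.zero_mem X⟩
  zero_id_mem X := ⟨.zero_id (isZero_zero C) X, ℛ.zero_mem X, ℒ.id_mem X⟩
  pushout_mem h t := h.exists_isPushout t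
  pullback_mem h t := h.exists_isPullback t

/-- A right weakly exact structure and a left weakly exact structure can be glued to a weakly
exact structure consisting of the kernel–cokernel pairs `(i, d)` with `i ∈ 𝓘` and `d ∈ 𝓓`. -/
theorem statement5 (ℛ : RightWeaklyExactStructure C) (ℒ : LeftWeaklyExactStructure C) :
    ∃ 𝒲 : WeaklyExactStructure C, ∀ {A B Z : C} (i : A ⟶ B) (d : B ⟶ Z),
      𝒲.W i d ↔ (IsKernelCokernelPair i d ∧ ℛ.I i ∧ ℒ.D d) := by
  exact ⟨.glue ℛ ℒ, fun _ _ ↦ ⟨fun ⟨h, hi, hd⟩ ↦ ⟨h, hi, hd⟩, fun ⟨h, hi, hd⟩ ↦ ⟨h, hi, hd⟩⟩⟩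

end Statement

end WeaklyExactPaper
end

section
/- Let 𝒜 be an additive category and let {𝓘_i}_{i ∈ I} be a family of right weakly exact structures on 𝒜. Then the intersection ⋂_{i ∈ I} 𝓘_i is again a right weakly exact structure on 𝒜; dually, the intersection of any family of left weakly exact structures is a left weakly exact structure. Consequently the right (resp. left) weakly exact structures on 𝒜, ordered by containment, form a complete meet-semilattice with meet given by intersection. -/
open CategoryTheory CategoryTheory.Limits ZeroObject

universe w v u

namespace WeaklyExactPaper

section Statement

variable {C : Type u} [Category.{v} C] [Preadditive C] [HasZeroObject C] [HasBinaryBiproducts C]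

namespace RightWeaklyExactStructure

lemma of_isPushout (S : RightWeaklyExactStructure C) {X Y X' Y' : C} {f : X ⟶ Y} {h : X ⟶ X'}
    {h' : Y ⟶ Y'} {f' : X' ⟶ Y'} (sq : IsPushout f h h' f') (hf : S.I f) : S.I f' := by
  obtain ⟨_, _, _, sq₀, hf₀⟩ := S.pushout_mem hf h
  exact S.iso_closed (Iso.refl X') (sq₀.isoIsPushout _ _ sq) (by simp) hf₀

lemma I_injective : Function.Injective
    (I : RightWeaklyExactStructure C → MorphismProperty C) := by
  rintro ⟨⟩ ⟨⟩ rfl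
  rfl

/-- Containment of the underlying classes of morphisms, as an order on right weakly exact
structures. -/
instance : PartialOrder (RightWeaklyExactStructure C) :=
  PartialOrder.lift (β := MorphismProperty C) I I_injective

lemma le_iff {S T : RightWeaklyExactStructure C} :
    S ≤ T ↔ ∀ {A B : C} (f : A ⟶ B), S.I f → T.I f :=
  Iff.rfl

/-- The intersection of a nonempty family of right weakly exact structures, its meet for
containment. -/
def iInter {ι : Sort*} [Nonempty ι] (F : ι → RightWeaklyExactStructure C) :
    RightWeaklyExactStructure C where
  I _ _ f := ∀ k, (F k).I f
  ker_of_mem hf := (F (Classical.arbitrary ι)).ker_of_mem (hf _)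
  iso_closed eA eB comm hf k := (F k).iso_closed eA eB comm (hf k)
  id_mem X k := (F k).id_mem X
  zero_mem X k := (F k).zero_mem X
  pushout_mem hf h := by
    -- Membership does not depend on the choice of pushout, so one pushout serves all the `F k`.
    obtain ⟨Y', h', f', sq, -⟩ := (F (Classical.arbitrary ι)).pushout_mem (hf _) h
    exact ⟨Y', h', f', sq, fun k => (F k).of_isPushout sq (hf k)⟩
  cancel_mem a b hab ha k := (F k).cancel_mem a b (hab k) ha
  sum_mem hf hf' k := (F k).sum_mem (hf k) (hf' k)

lemma iInter_I_iff {ι : Sort*} [Nonempty ι] (F : ι → RightWeaklyExactStructure C) {A B : C}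
    (f : A ⟶ B) : (iInter F).I f ↔ ∀ k, (F k).I f :=
  Iff.rfl

theorem isGLB_iInter {ι : Sort*} [Nonempty ι] (F : ι → RightWeaklyExactStructure C) :
    IsGLB (Set.range F) (iInter F) := by
  constructor
  · rintro _ ⟨k, rfl⟩
    exact le_iff.2 fun f hf => (iInter_I_iff F f).1 hf k
  · intro H hH
    exact le_iff.2 fun f hf =>
      (iInter_I_iff F f).2 fun k => le_iff.1 (hH (Set.mem_range_self k)) f hf

end RightWeaklyExactStructure

namespace LeftWeaklyExactStructure

lemma of_isPullback (S : LeftWeaklyExactStructure C) {B Z E P : C} {p : P ⟶ B} {e : P ⟶ E}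
    {f : B ⟶ Z} {h : E ⟶ Z} (sq : IsPullback p e f h) (hf : S.D f) : S.D e := by
  obtain ⟨_, _, _, sq₀, he₀⟩ := S.pullback_mem hf h
  exact S.iso_closed (sq₀.isoIsPullback _ _ sq) (Iso.refl E) (by simp) he₀

lemma D_injective : Function.Injective
    (D : LeftWeaklyExactStructure C → MorphismProperty C) := by
  rintro ⟨⟩ ⟨⟩ rfl
  rfl

/-- Containment of the underlying classes of morphisms, as an order on left weakly exact
structures. -/
instance : PartialOrder (LeftWeaklyExactStructure C) :=
  PartialOrder.lift (β := MorphismProperty C) D D_injective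

lemma le_iff {S T : LeftWeaklyExactStructure C} :
    S ≤ T ↔ ∀ {B Z : C} (g : B ⟶ Z), S.D g → T.D g :=
  Iff.rfl

/-- The intersection of a nonempty family of left weakly exact structures, its meet for
containment. -/
def iInter {ι : Sort*} [Nonempty ι] (F : ι → LeftWeaklyExactStructure C) :
    LeftWeaklyExactStructure C where
  D _ _ g := ∀ k, (F k).D g
  coker_of_mem hg := (F (Classical.arbitrary ι)).coker_of_mem (hg _)
  iso_closed eB eZ comm hg k := (F k).iso_closed eB eZ comm (hg k)
  id_mem X k := (F k).id_mem X
  zero_mem X k := (F k).zero_mem X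
  pullback_mem hf h := by
    obtain ⟨P, p, e, sq, -⟩ := (F (Classical.arbitrary ι)).pullback_mem (hf _) h
    exact ⟨P, p, e, sq, fun k => (F k).of_isPullback sq (hf k)⟩
  cancel_mem a b hab hb k := (F k).cancel_mem a b (hab k) hb
  sum_mem hg hg' k := (F k).sum_mem (hg k) (hg' k)

lemma iInter_D_iff {ι : Sort*} [Nonempty ι] (F : ι → LeftWeaklyExactStructure C) {B Z : C}
    (g : B ⟶ Z) : (iInter F).D g ↔ ∀ k, (F k).D g :=
  Iff.rfl

theorem isGLB_iInter {ι : Sort*} [Nonempty ι] (F : ι → LeftWeaklyExactStructure C) :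
    IsGLB (Set.range F) (iInter F) := by
  constructor
  · rintro _ ⟨k, rfl⟩
    exact le_iff.2 fun g hg => (iInter_D_iff F g).1 hg k
  · intro H hH
    exact le_iff.2 fun g hg =>
      (iInter_D_iff F g).2 fun k => le_iff.1 (hH (Set.mem_range_self k)) g hg

end LeftWeaklyExactStructure

/-- Intersections of (nonempty) families of right (resp. left) weakly exact structures are
again right (resp. left) weakly exact structures, and they are greatest lower bounds; hence
the right (resp. left) weakly exact structures form a complete meet-semilattice under
containment with meet given by intersection. -/
theorem statement8 :
    (∀ (ι : Type w) [Nonempty ι] (F : ι → RightWeaklyExactStructure C),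
      ∃ G : RightWeaklyExactStructure C,
        (∀ {A B : C} (f : A ⟶ B), G.I f ↔ ∀ k, (F k).I f) ∧
        (∀ k, ∀ {A B : C} (f : A ⟶ B), G.I f → (F k).I f) ∧
        (∀ H : RightWeaklyExactStructure C,
          (∀ k, ∀ {A B : C} (f : A ⟶ B), H.I f → (F k).I f) →
          ∀ {A B : C} (f : A ⟶ B), H.I f → G.I f)) ∧
    (∀ (ι : Type w) [Nonempty ι] (F : ι → LeftWeaklyExactStructure C),
      ∃ G : LeftWeaklyExactStructure C,
        (∀ {B Z : C} (g : B ⟶ Z), G.D g ↔ ∀ k, (F k).D g) ∧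
        (∀ k, ∀ {B Z : C} (g : B ⟶ Z), G.D g → (F k).D g) ∧
        (∀ H : LeftWeaklyExactStructure C,
          (∀ k, ∀ {B Z : C} (g : B ⟶ Z), H.D g → (F k).D g) →
          ∀ {B Z : C} (g : B ⟶ Z), H.D g → G.D g)) := by
  refine ⟨fun ι _ F => ?_, fun ι _ F => ?_⟩
  · obtain ⟨lower, greatest⟩ := RightWeaklyExactStructure.isGLB_iInter F
    exact ⟨.iInter F, RightWeaklyExactStructure.iInter_I_iff F,
      fun k => RightWeaklyExactStructure.le_iff.1 (lower (Set.mem_range_self k)),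
      fun H hH => RightWeaklyExactStructure.le_iff.1
        (greatest (Set.forall_mem_range.2 fun k => RightWeaklyExactStructure.le_iff.2 (hH k)))⟩
  · obtain ⟨lower, greatest⟩ := LeftWeaklyExactStructure.isGLB_iInter F
    exact ⟨.iInter F, LeftWeaklyExactStructure.iInter_D_iff F,
      fun k => LeftWeaklyExactStructure.le_iff.1 (lower (Set.mem_range_self k)),
      fun H hH => LeftWeaklyExactStructure.le_iff.1
        (greatest (Set.forall_mem_range.2 fun k => LeftWeaklyExactStructure.le_iff.2 (hH k)))⟩

end Statement

end WeaklyExactPaper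
end
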